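/- arXiv:1704.06430 — 3 statements merged into one kernel-verified Lean document; each statement's English description precedes it below -/
import Mathlib

section
/- Let N ≥ 1, and let (u, v) be a classical solution of the system (P_Λ) with Λ = 3 (no sign assumption on u, v), satisfying condition (h∞). Then there exists α ∈ ℝ such that u(x) = (1 + tanh((x_N + α)/√2))/2 and v(x) = (1 − tanh((x_N + α)/√2))/2 for every x ∈ ℝ^N; in particular u and v are 1-dimensional and monotone, and the solution is unique up to translations. -/
/-!
For `Λ = 3` the system decouples: `s = u + v` and `d = u - v` both solve the Allen–Cahn equation
`Δf = f³ - f`. By `(h∞)`, `s → 1` on both sides, while `d → ±1` as `x_N → ±∞`. It remains to show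
`s = 1` and `d = tanh ((x_N + α)/√2)` (the Gibbons conjecture for Allen–Cahn). Everything rests on
elementary maximum principle arguments, without compactness of translates or elliptic regularity.

* `le_one_of_allenCahn` (Keller–Osserman): every entire solution takes values in `[-1, 1]`.
* `comparison`: a maximum principle on unbounded sets for functions bounded below.
* `BddSol.lipschitz`: a global gradient bound, from comparing the odd part of the solution about a
  hyperplane with a concave profile on a slab.
* `gaussian_lower_bound`: a quantitative strong maximum principle with a Gaussian barrier.
* `slide`: if `d₁` is near `1` at the top and `d₂` near `-1` at the bottom, then `d₁ (· + ξ + h e_N)`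
  lies above `d₂` for large `h`, and `h` can be decreased as long as the gap between the two
  stays nondegenerate on strips in the sense of `NearbyPos`.

Sliding is used three times. Against the front `tanh (x_N/√2)`, `s` never meets an obstruction, so
`s` lies above all translates of the front and `s = 1`. Against itself, `d` meets no obstruction as
long as the translation has positive last component, so `d` depends on `x_N` only. Finally `d` is
slid against the front: the process must stop, and where it stops `d` is a translated front.
-/

open scoped RealInnerProductSpace
open Filter

noncomputable section

/-- The Laplacian of `f : ℝ^N → ℝ`, as the sum of the pure second partial
derivatives in the coordinate directions. -/
def lap (N : ℕ) (f : EuclideanSpace ℝ (Fin N) → ℝ) (x : EuclideanSpace ℝ (Fin N)) : ℝ :=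
  ∑ i : Fin N,
    fderiv ℝ (fun y => fderiv ℝ f y (EuclideanSpace.single i 1)) x (EuclideanSpace.single i 1)

/-- `(u, v)` is a classical solution of the system `(P_Λ)` on `ℝ^N`:
`u, v` are `C²` and `-Δu = u - u³ - Λ u v²`, `-Δv = v - v³ - Λ u² v` pointwise. -/
def IsSolution (N : ℕ) (Λ : ℝ) (u v : EuclideanSpace ℝ (Fin N) → ℝ) : Prop :=
  ContDiff ℝ 2 u ∧ ContDiff ℝ 2 v ∧
  (∀ x, -lap N u x = u x - (u x) ^ 3 - Λ * u x * (v x) ^ 2) ∧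
  (∀ x, -lap N v x = v x - (v x) ^ 3 - Λ * (u x) ^ 2 * v x)

/-- Condition `(h∞)`: `u → 1`, `v → 0` as `x_N → +∞` and `u → 0`, `v → 1` as
`x_N → -∞`, uniformly with respect to `x' ∈ ℝ^{N-1}` (the dimension is `N + 1`). -/
def Hinf (N : ℕ) (u v : EuclideanSpace ℝ (Fin (N + 1)) → ℝ) : Prop :=
  (∀ ε : ℝ, 0 < ε → ∃ M : ℝ, ∀ x : EuclideanSpace ℝ (Fin (N + 1)),
    M ≤ x (Fin.last N) → |u x - 1| < ε ∧ |v x| < ε) ∧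
  (∀ ε : ℝ, 0 < ε → ∃ M : ℝ, ∀ x : EuclideanSpace ℝ (Fin (N + 1)),
    x (Fin.last N) ≤ M → |u x| < ε ∧ |v x - 1| < ε)

/-! ### The Laplacian along coordinate lines -/

/-- `φ : ℝ → ℝ` is differentiable everywhere, with `φ'(0) = a` and `φ''(0) = b`. -/
def HasD2 (φ : ℝ → ℝ) (a b : ℝ) : Prop :=
  ∃ φ' : ℝ → ℝ, (∀ t, HasDerivAt φ (φ' t) t) ∧ φ' 0 = a ∧ HasDerivAt φ' b 0

lemma HasD2.add {φ ψ : ℝ → ℝ} {a b c d : ℝ} (h : HasD2 φ a b) (k : HasD2 ψ c d) :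
    HasD2 (fun t => φ t + ψ t) (a + c) (b + d) := by
  obtain ⟨f, hf, hf0, hf2⟩ := h
  obtain ⟨g, hg, hg0, hg2⟩ := k
  exact ⟨fun t => f t + g t, fun t => (hf t).add (hg t), by simp [hf0, hg0], hf2.add hg2⟩

lemma HasD2.mul {φ ψ : ℝ → ℝ} {a b c d : ℝ} (h : HasD2 φ a b) (k : HasD2 ψ c d) :
    HasD2 (fun t => φ t * ψ t) (a * ψ 0 + φ 0 * c) (b * ψ 0 + 2 * (a * c) + φ 0 * d) := by
  obtain ⟨f, hf, rfl, hf2⟩ := h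
  obtain ⟨g, hg, rfl, hg2⟩ := k
  refine ⟨fun t => f t * ψ t + φ t * g t, fun t => (hf t).mul (hg t), rfl, ?_⟩
  exact ((hf2.mul (hg 0)).add ((hf 0).mul hg2)).congr_deriv (by ring)

lemma HasD2.const_mul {φ : ℝ → ℝ} {a b : ℝ} (c : ℝ) (h : HasD2 φ a b) :
    HasD2 (fun t => c * φ t) (c * a) (c * b) := by
  obtain ⟨f, hf, rfl, hf2⟩ := h
  exact ⟨fun t => c * f t, fun t => (hf t).const_mul c, rfl, hf2.const_mul c⟩

lemma HasD2.exp {φ : ℝ → ℝ} {a b : ℝ} (h : HasD2 φ a b) :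
    HasD2 (fun t => Real.exp (φ t)) (Real.exp (φ 0) * a) (Real.exp (φ 0) * (a ^ 2 + b)) := by
  obtain ⟨f, hf, rfl, hf2⟩ := h
  refine ⟨fun t => Real.exp (φ t) * f t, fun t => (hf t).exp, rfl, ?_⟩
  exact ((hf 0).exp.mul hf2).congr_deriv (by ring)

lemma HasD2.comp_neg {φ : ℝ → ℝ} {a b : ℝ} (h : HasD2 φ a b) :
    HasD2 (fun t => φ (-t)) (-a) b := by
  obtain ⟨f, hf, rfl, hf2⟩ := h
  refine ⟨fun t => -f (-t), fun t => ?_, by simp, ?_⟩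
  · exact ((hf (-t)).comp t (hasDerivAt_neg t)).congr_deriv (by ring)
  · have h1 : HasDerivAt f b (-0) := by simpa using hf2
    exact ((h1.comp (0 : ℝ) (hasDerivAt_neg 0)).neg).congr_deriv (by ring)

lemma hasD2_quadratic (A B C : ℝ) : HasD2 (fun t => A + B * t + C * t ^ 2) B (2 * C) := by
  refine ⟨fun t => B + 2 * C * t, fun t => ?_, by simp, ?_⟩
  · exact ((((hasDerivAt_id t).const_mul B).const_add A).add
      (((hasDerivAt_id t).pow 2).const_mul C)).congr_deriv (by simp; ring)
  · exact (((hasDerivAt_id (0 : ℝ)).const_mul (2 * C)).const_add B).congr_deriv (by simp)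

lemma HasD2.of_isLocalMin {φ : ℝ → ℝ} {a b : ℝ} (h : HasD2 φ a b) (hm : IsLocalMin φ 0) :
    a = 0 ∧ 0 ≤ b := by
  obtain ⟨f, hf, rfl, hf2⟩ := h
  have h0 : f 0 = 0 := hm.hasDerivAt_eq_zero (hf 0)
  refine ⟨h0, ?_⟩
  by_contra hb
  push Not at hb
  have hd : deriv φ = f := funext fun t => (hf t).deriv
  have hM : IsLocalMax φ 0 := isLocalMax_of_deriv_deriv_neg (by rw [hd, hf2.deriv]; exact hb)
    (by rw [hd, h0]) (hf 0).continuousAt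
  -- A point that is both a local minimum and a local maximum: `φ` is locally constant there.
  have hc : φ =ᶠ[nhds 0] fun _ => φ 0 := by
    filter_upwards [hm, hM] with t h1 h2 using le_antisymm h2 h1
  have hc' : f =ᶠ[nhds 0] fun _ => 0 := by
    filter_upwards [hc.eventually_nhds] with t ht
    exact (hf t).unique ((hasDerivAt_const t (φ 0)).congr_of_eventuallyEq ht)
  have := hf2.unique ((hasDerivAt_const (0 : ℝ) (0 : ℝ)).congr_of_eventuallyEq hc')
  linarith

/-- `f` is twice differentiable at `x` along each coordinate line, and the pure second partial
derivatives add up to `l`. Unlike an equation for `lap`, this carries the differentiability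
needed for the second derivative test. -/
def HasLap {n : ℕ} (f : EuclideanSpace ℝ (Fin n) → ℝ) (x : EuclideanSpace ℝ (Fin n)) (l : ℝ) :
    Prop :=
  ∃ a b : Fin n → ℝ,
    (∀ i, HasD2 (fun t : ℝ => f (x + t • EuclideanSpace.single i (1 : ℝ))) (a i) (b i)) ∧
      ∑ i, b i = l

section Laplacian

variable {n : ℕ} {f g : EuclideanSpace ℝ (Fin n) → ℝ} {x : EuclideanSpace ℝ (Fin n)} {l m : ℝ}

lemma HasLap.add (h : HasLap f x l) (k : HasLap g x m) : HasLap (fun y => f y + g y) x (l + m) := by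
  obtain ⟨a, b, h1, rfl⟩ := h
  obtain ⟨c, d, k1, rfl⟩ := k
  exact ⟨fun i => a i + c i, fun i => b i + d i, fun i => (h1 i).add (k1 i),
    Finset.sum_add_distrib⟩

lemma HasLap.const_mul (c : ℝ) (h : HasLap f x l) : HasLap (fun y => c * f y) x (c * l) := by
  obtain ⟨a, b, h1, rfl⟩ := h
  exact ⟨fun i => c * a i, fun i => c * b i, fun i => (h1 i).const_mul c,
    (Finset.mul_sum _ _ _).symm⟩

lemma HasLap.sub (h : HasLap f x l) (k : HasLap g x m) : HasLap (fun y => f y - g y) x (l - m) := by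
  convert h.add (k.const_mul (-1)) using 1
  · ext y; ring
  · ring

lemma HasLap.comp_add (τ : EuclideanSpace ℝ (Fin n)) (h : HasLap f (x + τ) l) :
    HasLap (fun y => f (y + τ)) x l := by
  obtain ⟨a, b, h1, rfl⟩ := h
  refine ⟨a, b, fun i => ?_, rfl⟩
  convert h1 i using 3
  abel

lemma HasLap.nonneg_of_isLocalMin (h : HasLap f x l) (hm : IsLocalMin f x) : 0 ≤ l := by
  obtain ⟨a, b, h1, rfl⟩ := h
  refine Finset.sum_nonneg fun i _ => ((h1 i).of_isLocalMin ?_).2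
  have hc : ContinuousAt (fun t : ℝ => x + t • EuclideanSpace.single i (1 : ℝ)) 0 := by fun_prop
  have hm' : IsLocalMin f ((fun t : ℝ => x + t • EuclideanSpace.single i (1 : ℝ)) 0) := by
    simpa using hm
  exact IsMinFilter.comp_tendsto hm' hc

lemma hasLap_of_contDiff (hf : ContDiff ℝ 2 f) (x : EuclideanSpace ℝ (Fin n)) :
    HasLap f x (lap n f x) := by
  refine ⟨fun i => fderiv ℝ f x (EuclideanSpace.single i 1), _, fun i => ?_, rfl⟩
  have hl : ∀ t : ℝ, HasDerivAt (fun t : ℝ => x + t • EuclideanSpace.single i (1 : ℝ))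
      (EuclideanSpace.single i (1 : ℝ)) t := fun t => by
    simpa using ((hasDerivAt_id t).smul_const (EuclideanSpace.single i (1 : ℝ))).const_add x
  have hd : Differentiable ℝ f := hf.differentiable (by norm_num)
  have hd2 : Differentiable ℝ (fun y => fderiv ℝ f y (EuclideanSpace.single i (1 : ℝ))) :=
    ((hf.fderiv_right (m := 1) (by norm_num)).clm_apply contDiff_const).differentiable
      (by norm_num)
  refine ⟨fun t => fderiv ℝ f (x + t • EuclideanSpace.single i (1 : ℝ))
    (EuclideanSpace.single i 1), fun t => ?_, by simp, ?_⟩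
  · exact (hd _).hasFDerivAt.comp_hasDerivAt t (hl t)
  · have := (hd2 (x + (0 : ℝ) • EuclideanSpace.single i (1 : ℝ))).hasFDerivAt.comp_hasDerivAt
      (0 : ℝ) (hl 0)
    simp only [zero_smul, add_zero] at this
    exact this

lemma norm_line_sq (x y : EuclideanSpace ℝ (Fin n)) (i : Fin n) (t : ℝ) :
    ‖x + t • EuclideanSpace.single i (1 : ℝ) - y‖ ^ 2 =
      ‖x - y‖ ^ 2 + 2 * (x i - y i) * t + 1 * t ^ 2 := by
  have : x + t • EuclideanSpace.single i (1 : ℝ) - y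
      = (x - y) + t • EuclideanSpace.single i (1 : ℝ) := by abel
  rw [this, norm_add_sq_real, inner_smul_right, EuclideanSpace.inner_single_right, norm_smul]
  simp
  ring

lemma hasD2_norm_sq (x y : EuclideanSpace ℝ (Fin n)) (i : Fin n) :
    HasD2 (fun t : ℝ => ‖x + t • EuclideanSpace.single i (1 : ℝ) - y‖ ^ 2)
      (2 * (x i - y i)) 2 := by
  simp_rw [norm_line_sq]
  simpa using hasD2_quadratic (‖x - y‖ ^ 2) (2 * (x i - y i)) 1

lemma hasLap_norm_sq (x y : EuclideanSpace ℝ (Fin n)) :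
    HasLap (fun z => ‖z - y‖ ^ 2) x (2 * n) :=
  ⟨_, fun _ => 2, fun i => hasD2_norm_sq x y i, by simp; ring⟩

lemma hasLap_gaussian (a : ℝ) (x y : EuclideanSpace ℝ (Fin n)) :
    HasLap (fun z => Real.exp (-a * ‖z - y‖ ^ 2)) x
      (Real.exp (-a * ‖x - y‖ ^ 2) * (4 * a ^ 2 * ‖x - y‖ ^ 2 - 2 * a * n)) := by
  refine ⟨_, _, fun i => ((hasD2_norm_sq x y i).const_mul (-a)).exp, ?_⟩
  simp only [zero_smul, add_zero]
  rw [← Finset.mul_sum, EuclideanSpace.real_norm_sq_eq (x - y), Finset.sum_add_distrib,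
    Finset.mul_sum]
  congr 1
  simp
  rw [sub_eq_add_neg]
  congr 1
  · rw [Finset.mul_sum]
    exact Finset.sum_congr rfl fun i _ => by ring
  · ring

lemma hasLap_coord {φ : ℝ → ℝ} {a b : ℝ} (k : Fin n) (h : HasD2 (fun t => φ (x k + t)) a b) :
    HasLap (fun z => φ (z k)) x b := by
  classical
  refine ⟨fun i => if i = k then a else 0, fun i => if i = k then b else 0, fun i => ?_, by simp⟩
  by_cases hi : i = k
  · subst hi
    simpa using h
  · have hk : k ≠ i := fun h => hi h.symm
    simpa [hi, hk] using hasD2_quadratic (φ (x k)) 0 0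

/-- Reflection in the hyperplane `x k = 0`. -/
def reflK {n : ℕ} (k : Fin n) (x : EuclideanSpace ℝ (Fin n)) : EuclideanSpace ℝ (Fin n) :=
  x - (2 * x k) • EuclideanSpace.single k (1 : ℝ)

lemma HasLap.comp_reflK (k : Fin n) (h : HasLap f (reflK k x) l) :
    HasLap (fun y => f (reflK k y)) x l := by
  classical
  obtain ⟨a, b, h1, rfl⟩ := h
  refine ⟨fun i => if i = k then -a i else a i, b, fun i => ?_, rfl⟩
  by_cases hi : i = k
  · subst hi
    simp only [if_true]
    convert (h1 i).comp_neg using 3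
    simp [reflK]
    module
  · have hk : k ≠ i := fun h => hi h.symm
    simp only [hi, if_false]
    convert h1 i using 3
    simp [reflK, hk]
    abel

end Laplacian

/-! ### Comparison principle and the a priori bound -/

/-- Maximum principle on a possibly unbounded closed set `Ω`: a function bounded below on `Ω`,
whose negative values in `Ω` occur only at interior points with `Δw ≤ c w`, is nonnegative.
A minimum of `w + ε‖·‖²` exists, and there `Δw ≥ -2nε`. -/
lemma comparison {n : ℕ} (w : EuclideanSpace ℝ (Fin n) → ℝ) (hw : Continuous w)
    (Ω : Set (EuclideanSpace ℝ (Fin n))) (hΩ : IsClosed Ω) (B c : ℝ) (hc : 0 < c)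
    (hB : ∀ x ∈ Ω, -B ≤ w x)
    (h : ∀ x ∈ Ω, w x < 0 → x ∈ interior Ω ∧ ∃ l, HasLap w x l ∧ l ≤ c * w x) :
    ∀ x ∈ Ω, 0 ≤ w x := by
  intro x₀ hx₀
  by_contra hneg
  push Not at hneg
  obtain ⟨ε, hε, hε1, hε2⟩ : ∃ ε : ℝ, 0 < ε ∧ ε * ‖x₀‖ ^ 2 ≤ -w x₀ / 2 ∧
      ε * (2 * n) < c * (-w x₀ / 2) := by
    have hδ : 0 < -w x₀ := by linarith
    refine ⟨min (-w x₀ / (2 * (‖x₀‖ ^ 2 + 1))) (c * (-w x₀) / (4 * (n + 1))),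
      by positivity, ?_, ?_⟩
    · calc _ ≤ -w x₀ / (2 * (‖x₀‖ ^ 2 + 1)) * (‖x₀‖ ^ 2 + 1) := by
            gcongr
            · exact min_le_left _ _
            · linarith
        _ = _ := by field_simp
    · calc _ ≤ c * (-w x₀) / (4 * (n + 1)) * (2 * n) := by
            gcongr
            exact min_le_right _ _
        _ < c * (-w x₀) / (4 * (n + 1)) * (2 * (n + 1)) := by
            have : (0 : ℝ) < c * (-w x₀) / (4 * (n + 1)) := by positivity
            gcongr
            linarith
        _ = _ := by field_simp; ring
  have hcont : Continuous fun x => w x + ε * ‖x - 0‖ ^ 2 := by fun_prop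
  obtain ⟨y, hy, hmin⟩ := hcont.continuousOn.exists_isMinOn' hΩ hx₀ (by
    have h1 : Tendsto (fun x : EuclideanSpace ℝ (Fin n) => ε * ‖x‖ ^ 2)
        (cocompact _ ⊓ 𝓟 Ω) atTop :=
      (((tendsto_pow_atTop (two_ne_zero)).comp
        tendsto_norm_cocompact_atTop).const_mul_atTop hε).mono_left inf_le_left
    have h2 : ∀ᶠ x in cocompact (EuclideanSpace ℝ (Fin n)) ⊓ 𝓟 Ω, x ∈ Ω :=
      eventually_inf_principal.2 (Eventually.of_forall fun _ h => h)
    filter_upwards [h1.eventually_ge_atTop (w x₀ + ε * ‖x₀ - 0‖ ^ 2 + B), h2] with x hx hxΩ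
    have := hB x hxΩ
    simp only [sub_zero] at hx ⊢
    linarith)
  have hle : w y + ε * ‖y - 0‖ ^ 2 ≤ w x₀ + ε * ‖x₀ - 0‖ ^ 2 := hmin hx₀
  have hwy : w y ≤ w x₀ / 2 := by
    have : 0 ≤ ε * ‖y - 0‖ ^ 2 := by positivity
    simp only [sub_zero] at *
    linarith
  obtain ⟨hint, l, hl, hlc⟩ := h y hy (by linarith)
  have hloc := hmin.isLocalMin (mem_interior_iff_mem_nhds.1 hint)
  have := (hl.add ((hasLap_norm_sq y 0).const_mul ε)).nonneg_of_isLocalMin hloc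
  nlinarith

/-- Keller–Osserman bound. At an interior maximum of `(R² - ‖x - x₀‖²) (f - 1)` on the ball of
radius `R`, the first and second derivative tests give `R² (f x₀ - 1)² ≤ 2n + 8`; then
`R → ∞`. No a priori bound on `f` is needed. -/
lemma le_one_of_allenCahn {n : ℕ} (f : EuclideanSpace ℝ (Fin n) → ℝ) (hf : Continuous f)
    (h : ∀ x, HasLap f x (f x ^ 3 - f x)) (x₀ : EuclideanSpace ℝ (Fin n)) : f x₀ ≤ 1 := by
  by_contra hneg
  push Not at hneg
  have key : ∀ R : ℝ, 0 < R → R ^ 2 * (f x₀ - 1) ^ 2 ≤ 2 * n + 8 := by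
    intro R hR
    have hcont : Continuous fun x => (R ^ 2 - ‖x - x₀‖ ^ 2) * (f x - 1) := by fun_prop
    obtain ⟨y, hy, hmax⟩ := (isCompact_closedBall x₀ R).exists_isMaxOn
      ⟨x₀, Metric.mem_closedBall_self hR.le⟩ hcont.continuousOn
    have hle : (R ^ 2 - ‖x₀ - x₀‖ ^ 2) * (f x₀ - 1) ≤ (R ^ 2 - ‖y - x₀‖ ^ 2) * (f y - 1) :=
      hmax (Metric.mem_closedBall_self hR.le)
    simp only [sub_self, norm_zero] at hle
    have hyR : ‖y - x₀‖ ≤ R := by rwa [mem_closedBall_iff_norm] at hy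
    have hη0 : 0 ≤ R ^ 2 - ‖y - x₀‖ ^ 2 := by nlinarith [norm_nonneg (y - x₀)]
    have hP : 0 < (R ^ 2 - ‖y - x₀‖ ^ 2) * (f y - 1) :=
      lt_of_lt_of_le (by have : 0 < f x₀ - 1 := by linarith
                         simp; positivity) hle
    have hη : 0 < R ^ 2 - ‖y - x₀‖ ^ 2 := by
      rcases hη0.lt_or_eq with h | h
      · exact h
      · rw [← h] at hP; simp at hP
    have hS : 0 < f y - 1 := (mul_pos_iff_of_pos_left hη).1 hP
    have hball : Metric.closedBall x₀ R ∈ nhds y := by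
      refine mem_of_superset (Metric.isOpen_ball.mem_nhds ?_) Metric.ball_subset_closedBall
      rw [mem_ball_iff_norm]
      nlinarith [norm_nonneg (y - x₀)]
    have hloc := hmax.isLocalMax hball
    obtain ⟨a, b, hab, hsum⟩ := h y
    set η := R ^ 2 - ‖y - x₀‖ ^ 2 with hηdef
    set S := f y - 1 with hSdef
    have hi : ∀ i, η ^ 2 * b i ≤ 2 * S * η + 8 * (y i - x₀ i) ^ 2 * S := by
      intro i
      have h1 : HasD2 (fun t : ℝ => R ^ 2 - ‖y + t • EuclideanSpace.single i (1 : ℝ) - x₀‖ ^ 2)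
          (-(2 * (y i - x₀ i))) (-2) := by
        convert (hasD2_quadratic (R ^ 2) 0 0).add ((hasD2_norm_sq y x₀ i).const_mul (-1)) using 1
        · ext t; ring
        · ring
        · ring
      have h2 : HasD2 (fun t : ℝ => f (y + t • EuclideanSpace.single i (1 : ℝ)) - 1)
          (a i) (b i) := by
        convert (hab i).add (hasD2_quadratic (-1) 0 0) using 1
        · ext t; ring
        · ring
        · ring
      have h3 := (h1.mul h2).const_mul (-1)
      have hmin : IsLocalMin (fun t : ℝ => -1 *
          ((R ^ 2 - ‖y + t • EuclideanSpace.single i (1 : ℝ) - x₀‖ ^ 2) *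
          (f (y + t • EuclideanSpace.single i (1 : ℝ)) - 1))) 0 := by
        have hc : ContinuousAt (fun t : ℝ => y + t • EuclideanSpace.single i (1 : ℝ)) 0 := by
          fun_prop
        have hloc' : IsLocalMin (fun x => -1 * ((R ^ 2 - ‖x - x₀‖ ^ 2) * (f x - 1)))
            ((fun t : ℝ => y + t • EuclideanSpace.single i (1 : ℝ)) 0) := by
          simpa using hloc.neg
        exact IsMinFilter.comp_tendsto
          (g := fun t : ℝ => y + t • EuclideanSpace.single i (1 : ℝ)) hloc' hc
      obtain ⟨e1, e2⟩ := h3.of_isLocalMin hmin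
      simp only [zero_smul, add_zero] at e1 e2
      rw [← hηdef, ← hSdef] at e1 e2
      have e3 : η * a i = 2 * (y i - x₀ i) * S := by linarith
      have e4 : 0 ≤ η * (2 * S + 4 * (y i - x₀ i) * a i - η * b i) := by
        apply mul_nonneg hη.le
        linarith
      have e5 : η * (2 * S + 4 * (y i - x₀ i) * a i - η * b i)
          = 2 * S * η + 4 * (y i - x₀ i) * (η * a i) - η ^ 2 * b i := by ring
      rw [e5, e3] at e4
      linarith
    have hs := Finset.sum_le_sum fun i (_ : i ∈ Finset.univ) => hi i
    rw [← Finset.mul_sum, hsum, Finset.sum_add_distrib, Finset.sum_const, ← Finset.sum_mul,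
      ← Finset.mul_sum] at hs
    have hnorm : ∑ i, (y i - x₀ i) ^ 2 = ‖y - x₀‖ ^ 2 := by
      rw [EuclideanSpace.real_norm_sq_eq]; simp
    rw [hnorm] at hs
    simp only [Finset.card_univ, Fintype.card_fin, nsmul_eq_mul] at hs
    have hfac : f y ^ 3 - f y = S * ((S + 1) * (S + 2)) := by rw [hSdef]; ring
    rw [hfac] at hs
    have hs2 : η ^ 2 * ((S + 1) * (S + 2)) ≤ 2 * n * η + 8 * ‖y - x₀‖ ^ 2 := by
      have : S * (η ^ 2 * ((S + 1) * (S + 2))) ≤ S * (2 * n * η + 8 * ‖y - x₀‖ ^ 2) := by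
        linarith
      exact le_of_mul_le_mul_left this hS
    have hs3 : (η * S) ^ 2 ≤ (2 * n + 8) * R ^ 2 := by
      have h1 : (η * S) ^ 2 ≤ η ^ 2 * ((S + 1) * (S + 2)) := by
        have : S ^ 2 ≤ (S + 1) * (S + 2) := by nlinarith
        rw [mul_pow]
        gcongr
      have h2 : (2 * n : ℝ) * η ≤ 2 * n * R ^ 2 := by
        gcongr
        rw [hηdef]
        linarith [sq_nonneg ‖y - x₀‖]
      nlinarith
    have hs4 : (R ^ 2 * (f x₀ - 1)) ^ 2 ≤ (η * S) ^ 2 := by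
      have : 0 ≤ R ^ 2 * (f x₀ - 1) := mul_nonneg (by positivity) (by linarith)
      have h5 : R ^ 2 * (f x₀ - 1) ≤ η * S := by simpa using hle
      gcongr
    have hR2 : 0 < R ^ 2 := by positivity
    have : R ^ 2 * (R ^ 2 * (f x₀ - 1) ^ 2) ≤ R ^ 2 * (2 * n + 8) := by nlinarith
    exact le_of_mul_le_mul_left this hR2
  have hδ : 0 < f x₀ - 1 := by linarith
  have h2n : (0 : ℝ) ≤ 2 * n + 8 := by positivity
  have h1 := key ((2 * n + 9) / (f x₀ - 1)) (by positivity)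
  rw [← mul_pow, div_mul_cancel₀ _ hδ.ne'] at h1
  nlinarith [(Nat.cast_nonneg n : (0 : ℝ) ≤ n)]

/-! ### Bounded solutions of the Allen–Cahn equation: gradient bound and positivity -/

/-- A solution of `Δd = d³ - d` with values in `[-1, 1]`. -/
structure BddSol {n : ℕ} (d : EuclideanSpace ℝ (Fin n) → ℝ) : Prop where
  diff : Differentiable ℝ d
  hasLap : ∀ x, HasLap d x (d x ^ 3 - d x)
  neg_one_le : ∀ x, -1 ≤ d x
  le_one : ∀ x, d x ≤ 1

section Estimates

variable {n : ℕ} {d d₁ d₂ : EuclideanSpace ℝ (Fin n) → ℝ}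

lemma BddSol.neg (hd : BddSol d) : BddSol (fun x => -d x) where
  diff := hd.diff.neg
  hasLap x := by
    convert (hd.hasLap x).const_mul (-1) using 1
    · ext y; ring
    · ring
  neg_one_le x := by linarith [hd.le_one x]
  le_one x := by linarith [hd.neg_one_le x]

/-- On the slab `0 ≤ x k ≤ 1`, the odd part of `d` about the hyperplane through `p` normal to
`e_k` is compared with the concave profile `4 x k - 2 (x k)²`. -/
lemma BddSol.odd_part_le (hd : BddSol d) (p : EuclideanSpace ℝ (Fin n)) (k : Fin n) {y : ℝ}
    (hy0 : 0 ≤ y) (hy1 : y ≤ 1) :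
    d (p + y • EuclideanSpace.single k (1 : ℝ)) - d (p - y • EuclideanSpace.single k (1 : ℝ))
      ≤ 4 * y := by
  have hdc := hd.diff.continuous
  have hrc : Continuous (reflK k : EuclideanSpace ℝ (Fin n) → _) := by unfold reflK; fun_prop
  have hlap : ∀ x, HasLap
      (fun x : EuclideanSpace ℝ (Fin n) => (4 * x k - 2 * x k ^ 2)
        - (d (x + p) - d (reflK k x + p))) x
      (-4 - ((d (x + p) ^ 3 - d (x + p)) - (d (reflK k x + p) ^ 3 - d (reflK k x + p)))) := by
    intro x
    have h1 : HasLap (fun x : EuclideanSpace ℝ (Fin n) => 4 * x k - 2 * x k ^ 2) x (-4) := by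
      refine hasLap_coord (φ := fun s => 4 * s - 2 * s ^ 2) (a := 4 - 4 * x k) k ?_
      convert hasD2_quadratic (4 * x k - 2 * x k ^ 2) (4 - 4 * x k) (-2) using 1
      · ext t; ring
      · norm_num
    have h2 := (hd.hasLap (x + p)).comp_add p
    have h3 := HasLap.comp_reflK (x := x) k ((hd.hasLap (reflK k x + p)).comp_add p)
    exact h1.sub (h2.sub h3)
  have hF : ∀ t : ℝ, -1 ≤ t → t ≤ 1 → -1 ≤ t ^ 3 - t ∧ t ^ 3 - t ≤ 1 := by
    intro t h1 h2
    constructor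
    · nlinarith [mul_nonneg (sq_nonneg t) (by linarith : 0 ≤ t + 1)]
    · nlinarith [mul_nonneg (sq_nonneg t) (by linarith : 0 ≤ 1 - t)]
  have hΩ : IsClosed {x : EuclideanSpace ℝ (Fin n) | 0 ≤ x k ∧ x k ≤ 1} :=
    isClosed_Icc.preimage (f := fun x : EuclideanSpace ℝ (Fin n) => x k) (by fun_prop)
  have hO : IsOpen {x : EuclideanSpace ℝ (Fin n) | 0 < x k ∧ x k < 1} :=
    isOpen_Ioo.preimage (f := fun x : EuclideanSpace ℝ (Fin n) => x k) (by fun_prop)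
  have hlow : ∀ x ∈ {x : EuclideanSpace ℝ (Fin n) | 0 ≤ x k ∧ x k ≤ 1},
      -2 ≤ (4 * x k - 2 * x k ^ 2) - (d (x + p) - d (reflK k x + p)) := by
    rintro x ⟨h0, h1⟩
    nlinarith [hd.le_one (x + p), hd.neg_one_le (reflK k x + p)]
  have key := comparison _ (by fun_prop) _ hΩ 2 1 one_pos hlow (by
    rintro x ⟨h0, h1⟩ hneg
    have hsub : {x : EuclideanSpace ℝ (Fin n) | 0 < x k ∧ x k < 1} ⊆
        {x | 0 ≤ x k ∧ x k ≤ 1} := fun z hz => ⟨hz.1.le, hz.2.le⟩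
    refine ⟨interior_maximal hsub hO ⟨?_, ?_⟩, _, hlap x, ?_⟩
    · refine h0.lt_of_ne fun h => ?_
      simp [reflK, ← h] at hneg
    · refine h1.lt_of_ne fun h => ?_
      rw [h] at hneg
      linarith [hd.le_one (x + p), hd.neg_one_le (reflK k x + p)]
    · have := hlow x ⟨h0, h1⟩
      have a1 := hF _ (hd.neg_one_le (x + p)) (hd.le_one (x + p))
      have a2 := hF _ (hd.neg_one_le (reflK k x + p)) (hd.le_one (reflK k x + p))
      linarith [a1.1, a2.2]) (y • EuclideanSpace.single k (1 : ℝ)) (by simp [hy0, hy1])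
  have e1 : reflK k (y • EuclideanSpace.single k (1 : ℝ)) + p
      = p - y • EuclideanSpace.single k (1 : ℝ) := by
    simp [reflK]
    module
  rw [e1, add_comm _ p] at key
  simp at key
  nlinarith

lemma BddSol.lipschitz (hd : BddSol d) (x y : EuclideanSpace ℝ (Fin n)) :
    |d x - d y| ≤ 2 * n * ‖x - y‖ := by
  have hcoord : ∀ p k, |fderiv ℝ d p (EuclideanSpace.single k (1 : ℝ))| ≤ 2 := by
    intro p k
    have hp : HasDerivAt (fun t : ℝ => p + t • EuclideanSpace.single k (1 : ℝ))
        (EuclideanSpace.single k (1 : ℝ)) 0 := by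
      simpa using ((hasDerivAt_id (0 : ℝ)).smul_const (EuclideanSpace.single k (1 : ℝ))).const_add p
    have hm : HasDerivAt (fun t : ℝ => p - t • EuclideanSpace.single k (1 : ℝ))
        (-EuclideanSpace.single k (1 : ℝ)) 0 := by
      simpa using ((hasDerivAt_id (0 : ℝ)).smul_const (EuclideanSpace.single k (1 : ℝ))).const_sub p
    have h1 := (hd.diff (p + (0 : ℝ) • EuclideanSpace.single k (1 : ℝ))).hasFDerivAt.comp_hasDerivAt
      (0 : ℝ) hp
    have h2 := (hd.diff (p - (0 : ℝ) • EuclideanSpace.single k (1 : ℝ))).hasFDerivAt.comp_hasDerivAt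
      (0 : ℝ) hm
    have h3 := (h1.sub h2).le_of_lip' (C := 4) (by norm_num) (by
      filter_upwards [Metric.ball_mem_nhds (0 : ℝ) one_pos] with t ht
      have ht1 : |t| ≤ 1 := by
        have := mem_ball_zero_iff.1 ht
        rw [Real.norm_eq_abs] at this
        exact this.le
      have b1 := hd.odd_part_le p k (abs_nonneg t) ht1
      have b2 := hd.neg.odd_part_le p k (abs_nonneg t) ht1
      simp only [Pi.sub_apply, Function.comp, zero_smul, add_zero, sub_zero, sub_self,
        Real.norm_eq_abs]
      rcases abs_cases t with ⟨h, _⟩ | ⟨h, _⟩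
      · rw [h] at b1 b2 ⊢
        rw [abs_le]
        constructor <;> linarith
      · rw [h] at b1 b2 ⊢
        simp only [neg_smul, sub_neg_eq_add, ← sub_eq_add_neg] at b1 b2
        rw [abs_le]
        constructor <;> linarith)
    simp only [zero_smul, add_zero, sub_zero, map_neg, sub_neg_eq_add, Real.norm_eq_abs,
      ← two_mul, abs_mul, Nat.abs_ofNat] at h3
    linarith
  have hgrad : ∀ p ∈ (Set.univ : Set (EuclideanSpace ℝ (Fin n))), ‖fderiv ℝ d p‖ ≤ 2 * n := by
    intro p _
    refine ContinuousLinearMap.opNorm_le_bound _ (by positivity) fun v => ?_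
    have hv : v = ∑ i, v i • EuclideanSpace.single i (1 : ℝ) := by
      simpa using ((EuclideanSpace.basisFun (Fin n) ℝ).sum_repr v).symm
    conv_lhs => rw [hv]
    rw [map_sum]
    calc _ ≤ ∑ i, ‖fderiv ℝ d p (v i • EuclideanSpace.single i (1 : ℝ))‖ := norm_sum_le _ _
      _ ≤ ∑ _i : Fin n, ‖v‖ * 2 := by
          refine Finset.sum_le_sum fun i _ => ?_
          rw [map_smul, norm_smul]
          exact mul_le_mul (PiLp.norm_apply_le v i) (hcoord p i) (norm_nonneg _) (norm_nonneg _)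
      _ = 2 * n * ‖v‖ := by simp; ring
  have := convex_univ.norm_image_sub_le_of_norm_fderiv_le (fun p _ => hd.diff p) hgrad
    (Set.mem_univ y) (Set.mem_univ x)
  rwa [Real.norm_eq_abs] at this

/-- Quantitative strong maximum principle: a nonnegative `w` with `Δw ≤ 2w` that is at least `δ`
on a ball of radius `ρ` lies above a Gaussian centred there, of width depending only on `ρ`. -/
lemma gaussian_lower_bound (n : ℕ) {ρ : ℝ} (hρ : 0 < ρ) :
    ∃ a : ℝ, 0 < a ∧ ∀ w : EuclideanSpace ℝ (Fin n) → ℝ, Continuous w → (∀ x, 0 ≤ w x) →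
      (∀ x, ∃ l, HasLap w x l ∧ l ≤ 2 * w x) → ∀ (y : EuclideanSpace ℝ (Fin n)) (δ : ℝ), 0 < δ →
      (∀ x, ‖x - y‖ ≤ ρ → δ ≤ w x) → ∀ x, δ * Real.exp (-a * ‖x - y‖ ^ 2) ≤ w x := by
  refine ⟨(n + 2) / ρ ^ 2 + 1, by positivity, ?_⟩
  set a : ℝ := (n + 2) / ρ ^ 2 + 1 with ha
  have ha1 : 1 ≤ a := by
    have : (0 : ℝ) ≤ (n + 2) / ρ ^ 2 := by positivity
    linarith
  have haρ : (n : ℝ) + 2 ≤ a * ρ ^ 2 := by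
    rw [ha, add_mul, div_mul_cancel₀ _ (by positivity)]
    nlinarith [sq_nonneg ρ]
  intro w hw hw0 hwl y δ hδ hball x
  rcases le_or_gt ‖x - y‖ ρ with hx | hx
  · refine le_trans ?_ (hball x hx)
    have : Real.exp (-a * ‖x - y‖ ^ 2) ≤ 1 := Real.exp_le_one_iff.2 (by
      have : 0 ≤ a * ‖x - y‖ ^ 2 := by positivity
      linarith)
    nlinarith
  have hΩ : IsClosed {x : EuclideanSpace ℝ (Fin n) | ρ ≤ ‖x - y‖} :=
    isClosed_le (by fun_prop) (by fun_prop)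
  have hO : IsOpen {x : EuclideanSpace ℝ (Fin n) | ρ < ‖x - y‖} :=
    isOpen_lt (by fun_prop) (by fun_prop)
  have hexp : ∀ z : EuclideanSpace ℝ (Fin n), Real.exp (-a * ‖z - y‖ ^ 2) ≤ 1 := fun z =>
    Real.exp_le_one_iff.2 (by
      have : 0 ≤ a * ‖z - y‖ ^ 2 := by positivity
      linarith)
  have key := comparison (fun z => w z - δ * Real.exp (-a * ‖z - y‖ ^ 2)) (by fun_prop) _ hΩ δ 2
    two_pos (fun z _ => by
      have := hw0 z
      have := hexp z
      nlinarith) (by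
    intro z hz hneg
    have hz' : ρ ≤ ‖z - y‖ := hz
    obtain ⟨l, hl, hl2⟩ := hwl z
    have hsub : {x : EuclideanSpace ℝ (Fin n) | ρ < ‖x - y‖} ⊆ {x | ρ ≤ ‖x - y‖} :=
      fun z (hz : ρ < ‖z - y‖) => hz.le
    refine ⟨interior_maximal hsub hO (hz'.lt_of_ne fun h => ?_), _,
      hl.sub ((hasLap_gaussian a z y).const_mul δ), ?_⟩
    · have := hball z h.ge
      have := hexp z
      nlinarith
    · have h1 : 2 ≤ 4 * a ^ 2 * ‖z - y‖ ^ 2 - 2 * a * n := by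
        have h2 : ρ ^ 2 ≤ ‖z - y‖ ^ 2 := by gcongr
        have h3 : 4 * a ^ 2 * ρ ^ 2 ≤ 4 * a ^ 2 * ‖z - y‖ ^ 2 := by gcongr
        have h4 : a * ((n : ℝ) + 2) ≤ a * (a * ρ ^ 2) := by gcongr
        have h5 : 0 ≤ a * (n : ℝ) := by positivity
        nlinarith
      have h6 : 0 < δ * Real.exp (-a * ‖z - y‖ ^ 2) := by positivity
      nlinarith) x hx.le
  linarith

end Estimates

/-! ### The sliding method -/

section Sliding

variable {N : ℕ} {d₁ d₂ : EuclideanSpace ℝ (Fin (N + 1)) → ℝ}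

/-- The unit vector in the direction of the last coordinate. -/
abbrev eLast (N : ℕ) : EuclideanSpace ℝ (Fin (N + 1)) := EuclideanSpace.single (Fin.last N) (1 : ℝ)

/-- Every point of each strip `|x_N| ≤ K` has, within a distance `R` depending only on `K`, a
point where `w ≥ δ`, with `δ > 0` depending only on `K`. -/
def NearbyPos (w : EuclideanSpace ℝ (Fin (N + 1)) → ℝ) : Prop :=
  ∀ K : ℝ, ∃ δ R : ℝ, 0 < δ ∧ ∀ x, |x (Fin.last N)| ≤ K → ∃ y, ‖x - y‖ ≤ R ∧ δ ≤ w y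

/-- Where `d₁ ≥ 9/10` or `d₂ ≤ -9/10`, the nonlinearity has the good sign, so a translate of `d₁`
lies above `d₂` everywhere as soon as it does so in between. -/
lemma le_of_le_strip (h₁ : BddSol d₁) (h₂ : BddSol d₂) {M₁ M₂ : ℝ}
    (hM₁ : ∀ x, M₁ ≤ x (Fin.last N) → 9 / 10 ≤ d₁ x)
    (hM₂ : ∀ x, x (Fin.last N) ≤ M₂ → d₂ x ≤ -(9 / 10)) (τ : EuclideanSpace ℝ (Fin (N + 1)))
    (h : ∀ x, M₂ < x (Fin.last N) → x (Fin.last N) + τ (Fin.last N) < M₁ → d₂ x ≤ d₁ (x + τ))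
    (x : EuclideanSpace ℝ (Fin (N + 1))) : d₂ x ≤ d₁ (x + τ) := by
  have hc₁ := h₁.diff.continuous
  have hc₂ := h₂.diff.continuous
  have key := comparison (fun x => d₁ (x + τ) - d₂ x) (by fun_prop) Set.univ isClosed_univ 2 1
    one_pos (fun x _ => by linarith [h₁.neg_one_le (x + τ), h₂.le_one x]) (by
    intro x _ hneg
    refine ⟨by simp, _, ((h₁.hasLap (x + τ)).comp_add τ).sub (h₂.hasLap x), ?_⟩
    have hp := h₁.neg_one_le (x + τ)
    have hq := h₂.le_one x
    have hcase : 9 / 10 ≤ d₁ (x + τ) ∨ d₂ x ≤ -(9 / 10) := by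
      by_contra hcon
      push Not at hcon
      have a1 : M₂ < x (Fin.last N) := by
        by_contra hh
        push Not at hh
        linarith [hM₂ x hh, hcon.2]
      have a2 : x (Fin.last N) + τ (Fin.last N) < M₁ := by
        by_contra hh
        push Not at hh
        linarith [hM₁ (x + τ) (by simpa using hh), hcon.1]
      linarith [h x a1 a2]
    generalize d₁ (x + τ) = p at *
    generalize d₂ x = q at *
    have hfac : 1 ≤ p ^ 2 + p * q + q ^ 2 - 1 := by
      rcases hcase with hh | hh <;> nlinarith
    nlinarith) x (Set.mem_univ x)
  linarith

lemma slide_step (h₁ : BddSol d₁) (h₂ : BddSol d₂) {M₁ M₂ : ℝ}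
    (hM₁ : ∀ x, M₁ ≤ x (Fin.last N) → 9 / 10 ≤ d₁ x)
    (hM₂ : ∀ x, x (Fin.last N) ≤ M₂ → d₂ x ≤ -(9 / 10)) (τ : EuclideanSpace ℝ (Fin (N + 1)))
    (hle : ∀ x, d₂ x ≤ d₁ (x + τ)) (hpos : NearbyPos fun x => d₁ (x + τ) - d₂ x) :
    ∃ ε₀ : ℝ, 0 < ε₀ ∧ ∀ ε, 0 ≤ ε → ε ≤ ε₀ → ∀ x, d₂ x ≤ d₁ (x + (τ - ε • eLast N)) := by
  have hc₁ := h₁.diff.continuous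
  have hc₂ := h₂.diff.continuous
  obtain ⟨δ, R, hδ, hR⟩ := hpos (max |M₂| |M₁ + 1 - τ (Fin.last N)|)
  set L : ℝ := 2 * ((N + 1 : ℕ) : ℝ) with hL
  have hL0 : 0 < L := by positivity
  obtain ⟨a, ha, hG⟩ := gaussian_lower_bound (N + 1) (ρ := δ / (4 * L)) (by positivity)
  -- The infimum of `d₁ (· + τ) - d₂` over the strip is at least `c`.
  set c : ℝ := δ / 2 * Real.exp (-a * R ^ 2) with hcdef
  have hc0 : 0 < c := by positivity
  have hstrip : ∀ x : EuclideanSpace ℝ (Fin (N + 1)), M₂ ≤ x (Fin.last N) →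
      x (Fin.last N) ≤ M₁ + 1 - τ (Fin.last N) → c ≤ d₁ (x + τ) - d₂ x := by
    intro x hx1 hx2
    obtain ⟨y, hxy, hy⟩ := hR x (by
      rw [abs_le]
      constructor
      · linarith [neg_abs_le M₂, le_max_left |M₂| |M₁ + 1 - τ (Fin.last N)|]
      · exact hx2.trans ((le_abs_self _).trans (le_max_right _ _)))
    have hw := hG (fun x => d₁ (x + τ) - d₂ x) (by fun_prop) (fun x => sub_nonneg.2 (hle x))
      (fun x => by
        refine ⟨_, ((h₁.hasLap (x + τ)).comp_add τ).sub (h₂.hasLap x), ?_⟩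
        have hp := h₁.neg_one_le (x + τ)
        have hp' := h₁.le_one (x + τ)
        have hq := h₂.le_one x
        have hq' := h₂.neg_one_le x
        have hpq := hle x
        generalize d₁ (x + τ) = p at *
        generalize d₂ x = q at *
        have hfac : p ^ 2 + p * q + q ^ 2 ≤ 3 := by nlinarith
        nlinarith) y (δ / 2) (by positivity) (by
        intro z hz
        have e1 := h₁.lipschitz (z + τ) (y + τ)
        have e2 := h₂.lipschitz z y
        rw [← hL] at e1 e2
        rw [add_sub_add_right_eq_sub] at e1
        have e3 : L * ‖z - y‖ ≤ δ / 4 := by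
          calc _ ≤ L * (δ / (4 * L)) := by gcongr
            _ = δ / 4 := by field_simp
        rw [abs_le] at e1 e2
        linarith [e1.1, e2.2]) x
    refine le_trans ?_ hw
    rw [hcdef]
    have : ‖x - y‖ ^ 2 ≤ R ^ 2 := by gcongr
    gcongr δ / 2 * Real.exp ?_
    nlinarith
  refine ⟨min 1 (c / L), by positivity, fun ε hε hε' x => ?_⟩
  have hε1 : ε ≤ 1 := hε'.trans (min_le_left _ _)
  have hε2 : L * ε ≤ c := by
    have := hε'.trans (min_le_right _ _)
    rwa [le_div_iff₀ hL0, mul_comm] at this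
  refine le_of_le_strip h₁ h₂ hM₁ hM₂ _ (fun x hx1 hx2 => ?_) x
  have hx3 : x (Fin.last N) + (τ (Fin.last N) - ε) < M₁ := by simpa using hx2
  have e0 := hstrip x hx1.le (by linarith)
  have e1 := h₁.lipschitz (x + (τ - ε • eLast N)) (x + τ)
  have e2 : ‖x + (τ - ε • eLast N) - (x + τ)‖ = ε := by
    have : x + (τ - ε • eLast N) - (x + τ) = -(ε • eLast N) := by abel
    rw [this, norm_neg, norm_smul]
    simp [abs_of_nonneg hε]
  rw [e2, ← hL, abs_le] at e1
  linarith [e1.1]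

/-- Sliding: translates by `ξ + h e_N` with `h` large lie above `d₂`, and `h` can be lowered down
to `h₀` as long as `d₁ (· + τ) - d₂` does not degenerate on strips. -/
lemma slide (h₁ : BddSol d₁) (h₂ : BddSol d₂) {M₁ M₂ : ℝ}
    (hM₁ : ∀ x, M₁ ≤ x (Fin.last N) → 9 / 10 ≤ d₁ x)
    (hM₂ : ∀ x, x (Fin.last N) ≤ M₂ → d₂ x ≤ -(9 / 10)) (ξ : EuclideanSpace ℝ (Fin (N + 1)))
    (h₀ : ℝ)
    (H : ∀ h, h₀ ≤ h → (∀ x, d₂ x ≤ d₁ (x + (ξ + h • eLast N))) →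
      NearbyPos fun x => d₁ (x + (ξ + h • eLast N)) - d₂ x) :
    ∀ x, d₂ x ≤ d₁ (x + (ξ + h₀ • eLast N)) := by
  have hc₁ := h₁.diff.continuous
  set A : Set ℝ := {h | ∀ x, d₂ x ≤ d₁ (x + (ξ + h • eLast N))} with hA
  have hclosed : IsClosed A := by
    rw [hA, Set.ofPred_forall]
    exact isClosed_iInter fun x => isClosed_le (by fun_prop) (by fun_prop)
  have hlarge : ∀ h, M₁ - M₂ - ξ (Fin.last N) ≤ h → h ∈ A := by
    intro h hh
    refine le_of_le_strip h₁ h₂ hM₁ hM₂ _ fun x hx1 hx2 => ?_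
    simp at hx2
    linarith
  change h₀ ∈ A
  by_contra hcon
  have hbdd : BddAbove Aᶜ := ⟨M₁ - M₂ - ξ (Fin.last N), fun h hh => by
    by_contra hlt
    exact hh (hlarge h (by linarith))⟩
  have hsup : h₀ ≤ sSup Aᶜ := le_csSup hbdd hcon
  have habove : ∀ h, sSup Aᶜ < h → h ∈ A := by
    intro h hh
    by_contra hn
    exact absurd (le_csSup hbdd hn) (not_le.2 hh)
  have hmem : sSup Aᶜ ∈ A := by
    have : Set.Ioi (sSup Aᶜ) ⊆ A := fun h hh => habove h hh
    have h2 := hclosed.closure_subset_iff.2 this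
    rw [closure_Ioi] at h2
    exact h2 Set.self_mem_Ici
  obtain ⟨ε₀, hε₀, hε⟩ := slide_step h₁ h₂ hM₁ hM₂ _ hmem (H _ hsup hmem)
  have : sSup Aᶜ ≤ sSup Aᶜ - ε₀ := by
    refine csSup_le ⟨h₀, hcon⟩ fun h hh => ?_
    by_contra hlt
    push Not at hlt
    apply hh
    have hhs : h ≤ sSup Aᶜ := le_csSup hbdd hh
    intro x
    have := hε (sSup Aᶜ - h) (by linarith) (by linarith) x
    have e : ξ + sSup Aᶜ • eLast N - (sSup Aᶜ - h) • eLast N = ξ + h • eLast N := by module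
    rwa [e] at this
  linarith

end Sliding

/-! ### The one-dimensional profile -/

lemma hasDerivAt_tanh' (x : ℝ) : HasDerivAt Real.tanh (1 - Real.tanh x ^ 2) x := by
  have hc := (Real.cosh_pos x).ne'
  have h := (Real.hasDerivAt_sinh x).div (Real.hasDerivAt_cosh x) hc
  have e : Real.tanh = fun y => Real.sinh y / Real.cosh y :=
    funext fun y => Real.tanh_eq_sinh_div_cosh y
  rw [e]
  refine h.congr_deriv ?_
  field_simp

lemma tanh_mono' : Monotone Real.tanh := by
  intro x y hxy
  by_contra hlt
  push Not at hlt
  have := Real.artanh_lt_artanh (Real.neg_one_lt_tanh y) (Real.tanh_lt_one x) hlt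
  rw [Real.artanh_tanh, Real.artanh_tanh] at this
  linarith

/-- The planar front `x ↦ tanh (x_N / √2)`. -/
def front (N : ℕ) (x : EuclideanSpace ℝ (Fin (N + 1))) : ℝ :=
  Real.tanh (x (Fin.last N) / Real.sqrt 2)

lemma bddSol_front (N : ℕ) : BddSol (front N) where
  diff := by
    have h : Differentiable ℝ Real.tanh := fun x => (hasDerivAt_tanh' x).differentiableAt
    have h2 : Differentiable ℝ
        (fun x : EuclideanSpace ℝ (Fin (N + 1)) => x (Fin.last N) / Real.sqrt 2) := by fun_prop
    exact h.comp h2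
  hasLap x := by
    set r := Real.sqrt 2 with hr
    have hr0 : r ≠ 0 := by positivity
    have hr2 : r ^ 2 = 2 := Real.sq_sqrt (by norm_num)
    refine hasLap_coord (φ := fun s => Real.tanh (s / r)) (Fin.last N)
      (a := (1 - Real.tanh ((x (Fin.last N) + 0) / r) ^ 2) * (1 / r)) ?_
    have hin : ∀ t : ℝ, HasDerivAt (fun t : ℝ => (x (Fin.last N) + t) / r) (1 / r) t := fun t =>
      ((hasDerivAt_id t).const_add _).div_const r
    have hT : ∀ t : ℝ, HasDerivAt (fun t : ℝ => Real.tanh ((x (Fin.last N) + t) / r))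
        ((1 - Real.tanh ((x (Fin.last N) + t) / r) ^ 2) * (1 / r)) t := fun t =>
      (hasDerivAt_tanh' _).comp t (hin t)
    refine ⟨fun t => (1 - Real.tanh ((x (Fin.last N) + t) / r) ^ 2) * (1 / r), hT, rfl, ?_⟩
    refine ((((hT 0).pow 2).const_sub 1).mul_const (1 / r)).congr_deriv ?_
    rw [add_zero, front, ← hr]
    field_simp
    rw [hr2]
    ring
  neg_one_le x := (Real.neg_one_lt_tanh _).le
  le_one x := (Real.tanh_lt_one _).le

lemma front_le_neg (N : ℕ) : ∃ M : ℝ, ∀ x, x (Fin.last N) ≤ M → front N x ≤ -(9 / 10) := by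
  refine ⟨Real.artanh (-(9 / 10)) * Real.sqrt 2, fun x hx => ?_⟩
  have hr : 0 < Real.sqrt 2 := by positivity
  calc front N x ≤ Real.tanh (Real.artanh (-(9 / 10))) := tanh_mono' ((div_le_iff₀ hr).2 hx)
    _ = -(9 / 10) := Real.tanh_artanh (by constructor <;> norm_num)

/-! ### Classification of the two decoupled components -/

section Classification

variable {N : ℕ} {d : EuclideanSpace ℝ (Fin (N + 1)) → ℝ}

/-- A solution close to `1` on both sides lies above every translate of the front, hence is `1`. -/
lemma eq_one_of_both_ends (hd : BddSol d) {M₁ M₂ : ℝ}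
    (hM₁ : ∀ x, M₁ ≤ x (Fin.last N) → 9 / 10 ≤ d x)
    (hM₂ : ∀ x, x (Fin.last N) ≤ M₂ → 9 / 10 ≤ d x) (x : EuclideanSpace ℝ (Fin (N + 1))) :
    d x = 1 := by
  obtain ⟨M, hM⟩ := front_le_neg N
  have key : ∀ h : ℝ, ∀ x, front N x ≤ d (x + (0 + h • eLast N)) := by
    intro h₀
    refine slide hd (bddSol_front N) hM₁ hM 0 h₀ fun h _ _ K => ?_
    refine ⟨1, ‖K + |M₂| + |h| + |M|‖, one_pos, fun x hx => ?_⟩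
    refine ⟨x - (K + |M₂| + |h| + |M|) • eLast N, by simp [norm_smul], ?_⟩
    have hxK := (le_abs_self _).trans hx
    have e1 := hM (x - (K + |M₂| + |h| + |M|) • eLast N) (by
      simp
      linarith [neg_abs_le M, abs_nonneg M₂, abs_nonneg h])
    have e2 := hM₂ (x - (K + |M₂| + |h| + |M|) • eLast N + (0 + h • eLast N)) (by
      simp
      linarith [neg_abs_le M₂, abs_nonneg M, le_abs_self h])
    linarith
  refine le_antisymm (hd.le_one x) (le_of_forall_lt fun r hr => ?_)
  -- Slide until the front at `x` takes the value `max (1 + r) 1 / 2`, which lies in `(r, 1)`.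
  have hq0 : -1 < max (1 + r) 1 / 2 := by linarith [le_max_right (1 + r) 1]
  have hq1 : max (1 + r) 1 / 2 < 1 := by
    have : max (1 + r) 1 < 2 := max_lt (by linarith) (by norm_num)
    linarith
  have hqr : r < max (1 + r) 1 / 2 := by linarith [le_max_left (1 + r) 1]
  refine hqr.trans_le ?_
  have := key (x (Fin.last N) - Real.artanh (max (1 + r) 1 / 2) * Real.sqrt 2)
    (x - (x (Fin.last N) - Real.artanh (max (1 + r) 1 / 2) * Real.sqrt 2) • eLast N)
  rw [zero_add, sub_add_cancel] at this
  refine le_trans (le_of_eq ?_) this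
  have hr : Real.sqrt 2 ≠ 0 := by positivity
  simp [front, hr]
  rw [Real.tanh_artanh ⟨hq0, hq1⟩]

/-- Along `x - Jτ, …, x, …, x + Jτ` the solution climbs from below `-9/10` to above `9/10`, so some
single step along this chain climbs by a definite amount. -/
lemma nearbyPos_translate {M₁ M₂ : ℝ}
    (hM₁ : ∀ x, M₁ ≤ x (Fin.last N) → 9 / 10 ≤ d x)
    (hM₂ : ∀ x, x (Fin.last N) ≤ M₂ → d x ≤ -(9 / 10)) (τ : EuclideanSpace ℝ (Fin (N + 1)))
    (hτ : 0 < τ (Fin.last N)) : NearbyPos fun x => d (x + τ) - d x := by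
  intro K
  obtain ⟨J, hJ⟩ := exists_nat_gt ((|K| + |M₁| + |M₂|) / τ (Fin.last N))
  rw [div_lt_iff₀ hτ] at hJ
  have hJ0 : (0 : ℝ) < J := by
    by_contra hcon
    have : (J : ℝ) * τ (Fin.last N) ≤ 0 := mul_nonpos_of_nonpos_of_nonneg (not_lt.1 hcon) hτ.le
    linarith [abs_nonneg K, abs_nonneg M₁, abs_nonneg M₂]
  refine ⟨1 / (2 * J), J * ‖τ‖, by positivity, fun x hx => ?_⟩
  have hx' := abs_le.1 hx
  by_contra hcon
  push Not at hcon
  have hsum := Finset.sum_range_sub (fun j : ℕ => d (x + ((j : ℝ) - J) • τ)) (2 * J)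
  have htop : 9 / 10 ≤ d (x + (((2 * J : ℕ) : ℝ) - J) • τ) := by
    apply hM₁
    push_cast
    simp
    nlinarith [le_abs_self M₁, le_abs_self K, abs_nonneg M₂]
  have hbot : d (x + (((0 : ℕ) : ℝ) - J) • τ) ≤ -(9 / 10) := by
    apply hM₂
    push_cast
    simp
    nlinarith [neg_abs_le M₂, le_abs_self K, abs_nonneg M₁]
  have hle : ∑ j ∈ Finset.range (2 * J), (d (x + (((j + 1 : ℕ) : ℝ) - J) • τ)
      - d (x + ((j : ℝ) - J) • τ)) ≤ ∑ j ∈ Finset.range (2 * J), 1 / (2 * (J : ℝ)) := by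
    refine Finset.sum_le_sum fun j hj => ?_
    have hj' : (j : ℝ) ≤ 2 * J := by exact_mod_cast (Finset.mem_range.1 hj).le
    have := hcon (x + ((j : ℝ) - J) • τ) (by
      rw [sub_add_cancel_left, norm_neg, norm_smul, Real.norm_eq_abs]
      gcongr
      rw [abs_le]
      constructor <;> linarith [(Nat.cast_nonneg j : (0 : ℝ) ≤ j)])
    have e : x + ((j : ℝ) - J) • τ + τ = x + (((j + 1 : ℕ) : ℝ) - J) • τ := by
      push_cast
      module
    rw [e] at this
    exact this.le
  rw [hsum, Finset.sum_const, Finset.card_range, nsmul_eq_mul] at hle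
  have : ((2 * J : ℕ) : ℝ) * (1 / (2 * (J : ℝ))) = 1 := by
    push_cast
    field_simp
  rw [this] at hle
  exact absurd ((sub_le_sub htop hbot).trans hle) (by norm_num)

lemma eq_of_last_eq (hd : BddSol d) {M₁ M₂ : ℝ}
    (hM₁ : ∀ x, M₁ ≤ x (Fin.last N) → 9 / 10 ≤ d x)
    (hM₂ : ∀ x, x (Fin.last N) ≤ M₂ → d x ≤ -(9 / 10)) (x y : EuclideanSpace ℝ (Fin (N + 1)))
    (hxy : x (Fin.last N) = y (Fin.last N)) : d x = d y := by
  have hc := hd.diff.continuous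
  have hpos : ∀ τ : EuclideanSpace ℝ (Fin (N + 1)), 0 < τ (Fin.last N) → ∀ x, d x ≤ d (x + τ) := by
    intro τ hτ
    have := slide hd hd hM₁ hM₂ τ 0 fun h hh _ =>
      nearbyPos_translate hM₁ hM₂ _ (by simp; linarith)
    simpa using this
  -- The inequality passes to the limit of horizontal translations, whose inverses are horizontal.
  have hle : ∀ x y : EuclideanSpace ℝ (Fin (N + 1)), x (Fin.last N) = y (Fin.last N) →
      d x ≤ d y := by
    intro x y hxy
    have hcl : IsClosed {ε : ℝ | d x ≤ d (x + (y - x + ε • eLast N))} :=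
      isClosed_le (by fun_prop) (by fun_prop)
    have hsub : Set.Ioi (0 : ℝ) ⊆ {ε : ℝ | d x ≤ d (x + (y - x + ε • eLast N))} := fun ε hε =>
      hpos _ (by simpa [hxy] using hε) x
    have h2 := hcl.closure_subset_iff.2 hsub
    rw [closure_Ioi] at h2
    have h3 : d x ≤ d (x + (y - x + (0 : ℝ) • eLast N)) := h2 Set.self_mem_Ici
    simpa using h3
  exact le_antisymm (hle x y hxy) (hle y x hxy.symm)

/-- If the sliding against the front never stopped, `d` would be nonnegative at all heights. Hence
some translate of `d` above the front has a degenerate gap, and as both depend on `x_N` only this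
means that the gap vanishes. -/
lemma eq_front (hd : BddSol d) {M₁ M₂ : ℝ}
    (hM₁ : ∀ x, M₁ ≤ x (Fin.last N) → 9 / 10 ≤ d x)
    (hM₂ : ∀ x, x (Fin.last N) ≤ M₂ → d x ≤ -(9 / 10)) :
    ∃ h : ℝ, ∀ x, d (x + h • eLast N) = front N x := by
  obtain ⟨M, hM⟩ := front_le_neg N
  by_contra hcon
  push Not at hcon
  have key : ∀ h : ℝ, ∀ x, front N x ≤ d (x + (0 + h • eLast N)) := by
    intro h₀
    refine slide hd (bddSol_front N) hM₁ hM 0 h₀ fun h _ hle K => ?_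
    obtain ⟨y₀, hy₀⟩ := hcon h
    have hle₀ := hle y₀
    rw [zero_add] at hle₀ ⊢
    refine ⟨d (y₀ + h • eLast N) - front N y₀, K + |y₀ (Fin.last N)|,
      sub_pos.2 (hle₀.lt_of_ne hy₀.symm), fun x hx => ?_⟩
    refine ⟨x + (y₀ (Fin.last N) - x (Fin.last N)) • eLast N, ?_, le_of_eq ?_⟩
    · rw [sub_add_cancel_left, norm_neg, norm_smul]
      simp only [Real.norm_eq_abs, PiLp.norm_single, abs_one, mul_one]
      linarith [abs_sub (y₀ (Fin.last N)) (x (Fin.last N))]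
    · congr 1
      · exact eq_of_last_eq hd hM₁ hM₂ _ _ (by simp)
      · simp [front]
  have h1 := key M₂ 0
  have h2 := hM₂ (0 + (0 + M₂ • eLast N)) (by simp)
  have h3 : front N 0 = 0 := by simp [front]
  linarith

end Classification

/-! ### The system for `Λ = 3` -/

lemma bddSol_of_allenCahn {n : ℕ} {f : EuclideanSpace ℝ (Fin n) → ℝ} (hf : ContDiff ℝ 2 f)
    (h : ∀ x, HasLap f x (f x ^ 3 - f x)) : BddSol f where
  diff := hf.differentiable (by norm_num)
  hasLap := h
  neg_one_le x := by
    have := le_one_of_allenCahn (fun y => -f y) hf.continuous.neg (fun y => by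
      convert (h y).const_mul (-1) using 1
      · ext z; ring
      · ring) x
    linarith
  le_one := le_one_of_allenCahn f hf.continuous h

/-- Theorem 1.8: for `Λ = 3`, complete classification of the
(possibly sign-changing) solutions satisfying `(h∞)`: they are the explicit
one-dimensional `tanh`-profiles, unique up to translations. -/
theorem stmt_8 (N : ℕ)
    (u v : EuclideanSpace ℝ (Fin (N + 1)) → ℝ)
    (hsol : IsSolution (N + 1) 3 u v)
    (hinf : Hinf N u v) :
    ∃ α : ℝ, ∀ x : EuclideanSpace ℝ (Fin (N + 1)),
      u x = (1 + Real.tanh ((x (Fin.last N) + α) / Real.sqrt 2)) / 2 ∧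
      v x = (1 - Real.tanh ((x (Fin.last N) + α) / Real.sqrt 2)) / 2 := by
  obtain ⟨hu, hv, hup, hvp⟩ := hsol
  have hsum : BddSol (fun x => u x + v x) := by
    refine bddSol_of_allenCahn (hu.add hv) fun x => ?_
    convert (hasLap_of_contDiff hu x).add (hasLap_of_contDiff hv x) using 1
    linear_combination hup x + hvp x
  have hdif : BddSol (fun x => u x - v x) := by
    refine bddSol_of_allenCahn (hu.sub hv) fun x => ?_
    convert (hasLap_of_contDiff hu x).sub (hasLap_of_contDiff hv x) using 1
    linear_combination hup x - hvp x
  obtain ⟨M₁, hM₁⟩ := hinf.1 (1 / 20) (by norm_num)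
  obtain ⟨M₂, hM₂⟩ := hinf.2 (1 / 20) (by norm_num)
  have b₁ : ∀ x, M₁ ≤ x (Fin.last N) →
      (-(1 / 20) < u x - 1 ∧ u x - 1 < 1 / 20) ∧ -(1 / 20) < v x ∧ v x < 1 / 20 := fun x hx =>
    ⟨abs_lt.1 (hM₁ x hx).1, abs_lt.1 (hM₁ x hx).2⟩
  have b₂ : ∀ x, x (Fin.last N) ≤ M₂ →
      (-(1 / 20) < u x ∧ u x < 1 / 20) ∧ -(1 / 20) < v x - 1 ∧ v x - 1 < 1 / 20 := fun x hx =>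
    ⟨abs_lt.1 (hM₂ x hx).1, abs_lt.1 (hM₂ x hx).2⟩
  have hone : ∀ x, u x + v x = 1 := eq_one_of_both_ends hsum (M₁ := M₁) (M₂ := M₂)
    (fun x hx => by linarith [(b₁ x hx).1.1, (b₁ x hx).2.1])
    (fun x hx => by linarith [(b₂ x hx).1.1, (b₂ x hx).2.1])
  obtain ⟨h, hh⟩ := eq_front hdif (M₁ := M₁) (M₂ := M₂)
    (fun x hx => by linarith [(b₁ x hx).1.1, (b₁ x hx).2.2])
    (fun x hx => by linarith [(b₂ x hx).1.2, (b₂ x hx).2.1])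
  refine ⟨-h, fun x => ?_⟩
  have e1 := hh (x - h • eLast N)
  have e2 : front N (x - h • eLast N)
      = Real.tanh ((x (Fin.last N) + -h) / Real.sqrt 2) := by
    simp [front, sub_eq_add_neg]
  rw [e2, sub_add_cancel] at e1
  have e3 := hone x
  constructor <;> linarith
end
end

section
/- Let N ≥ 1, and let (u, v) be a classical solution of the system (P_Λ) with Λ = 3 and u > 0, v > 0 at every point of ℝ^N. Then ∂_N u > 0 at every point of ℝ^N if and only if ∂_N v < 0 at every point of ℝ^N. -/
/-!
For `Λ = 3` the coupling terms complete the cube: `w = u + v` satisfies `Δw = w³ - w`, because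
`(u + v)³ = u³ + 3u²v + 3uv² + v³`. A positive entire solution of this equation is identically
`1` (`eq_one_of_allenCahn`), so `v = 1 - u` and the partial derivatives of `u` and `v` are
opposite.

No growth of `w` is assumed, so the Liouville theorem is obtained from explicit estimates at the
centre `x` of a ball of radius `R`, followed by `R → ∞`. With `η = R² - |· - x|²`:
* at an interior maximum of `η w`, the first and second order conditions yield
  `w(x)² ≤ 1 + O(R⁻²)` (`sq_le_of_allenCahn`);
* at an interior maximum of `η² / w`, a multiple of `η²` touches `w` from below. Since
  `Δ(η²) ≥ -O(R⁻²) η²`, this yields `w(x)² ≥ 1 - O(R⁻²)` (`le_sq_of_allenCahn`).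

The comparison of Laplacians is carried out one coordinate line at a time, which only needs the
second-derivative test on `ℝ`.
-/

open scoped RealInnerProductSpace
open Filter

noncomputable section

/-! ### Second-order conditions on the line -/

/-- Second-derivative test (necessary condition) at a local maximum. -/
lemma second_deriv_nonpos_of_isLocalMax {f f' : ℝ → ℝ} {f2 : ℝ}
    (hf : ∀ t, HasDerivAt f (f' t) t) (hf' : HasDerivAt f' f2 0)
    (hmax : IsLocalMax f 0) : f2 ≤ 0 := by
  by_contra! hpos
  have hd : deriv f = f' := funext fun t => (hf t).deriv
  have hd2 : deriv (deriv f) 0 = f2 := by rw [hd]; exact hf'.deriv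
  have hmin : IsLocalMin f 0 :=
    isLocalMin_of_deriv_deriv_pos (by rw [hd2]; exact hpos) hmax.deriv_eq_zero
      (hf 0).continuousAt
  -- A point that is both a local maximum and a local minimum has `f` locally constant.
  have hconst : f =ᶠ[nhds 0] fun _ => f 0 := by
    filter_upwards [hmax, hmin] with t h1 h2 using le_antisymm h1 h2
  have h0 : deriv (deriv f) 0 = 0 := by
    rw [hconst.deriv.deriv_eq]; simp
  linarith

lemma hasDerivAt_quad (a b t : ℝ) :
    HasDerivAt (fun t => a - 2 * b * t - t ^ 2) (-2 * b - 2 * t) t :=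
  ((((hasDerivAt_id t).const_mul (2 * b)).const_sub a).sub (hasDerivAt_pow 2 t)).congr_deriv
    (by simp)

lemma hasDerivAt_quad_deriv (b : ℝ) : HasDerivAt (fun t : ℝ => -2 * b - 2 * t) (-2) 0 :=
  (((hasDerivAt_id (0 : ℝ)).const_mul 2).const_sub (-2 * b)).congr_deriv (by simp)

/-- The one-dimensional inequality behind the upper bound: `g` is multiplied by a quadratic
weight, and the first-order condition at the maximum eliminates `g' 0`. -/
lemma second_deriv_le_of_weighted_max {g g' : ℝ → ℝ} {g2 a b : ℝ}
    (hg : ∀ t, HasDerivAt g (g' t) t) (hg' : HasDerivAt g' g2 0) (ha : 0 < a)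
    (hmax : IsLocalMax (fun t => (a - 2 * b * t - t ^ 2) * g t) 0) :
    a ^ 2 * g2 ≤ (8 * b ^ 2 + 2 * a) * g 0 := by
  have hη := hasDerivAt_quad a b
  have hη' := hasDerivAt_quad_deriv b
  have h1 : ∀ t, HasDerivAt (fun t => (a - 2 * b * t - t ^ 2) * g t)
      ((-2 * b - 2 * t) * g t + (a - 2 * b * t - t ^ 2) * g' t) t :=
    fun t => (hη t).mul (hg t)
  have h2 := (hη'.mul (hg 0)).add ((hη 0).mul hg')
  have h3 := second_deriv_nonpos_of_isLocalMax h1 h2 hmax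
  have h4 : (-2 * b - 2 * 0) * g 0 + (a - 2 * b * 0 - 0 ^ 2) * g' 0 = 0 :=
    hmax.hasDerivAt_eq_zero (h1 0)
  have h5 : a * g' 0 = 2 * b * g 0 := by linarith
  have h6 : a * g2 ≤ 2 * g 0 + 4 * b * g' 0 := by linarith
  calc a ^ 2 * g2 = a * (a * g2) := by ring
    _ ≤ a * (2 * g 0 + 4 * b * g' 0) := mul_le_mul_of_nonneg_left h6 ha.le
    _ = 2 * a * g 0 + 4 * b * (a * g' 0) := by ring
    _ = _ := by rw [h5]; ring

/-- The one-dimensional inequality behind the lower bound: `g` is touched from below by a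
multiple of the square of a quadratic weight. -/
lemma le_second_deriv_of_touching {g g' : ℝ → ℝ} {g2 a b c : ℝ}
    (hg : ∀ t, HasDerivAt g (g' t) t) (hg' : HasDerivAt g' g2 0)
    (hmax : IsLocalMax (fun t => c * (a - 2 * b * t - t ^ 2) ^ 2 - g t) 0) :
    c * (8 * b ^ 2 - 4 * a) ≤ g2 := by
  have hη := hasDerivAt_quad a b
  have hη' := hasDerivAt_quad_deriv b
  have h1 : ∀ t, HasDerivAt (fun t => c * (a - 2 * b * t - t ^ 2) ^ 2 - g t)
      (c * (2 * ((a - 2 * b * t - t ^ 2) * (-2 * b - 2 * t))) - g' t) t := by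
    intro t
    refine ((((hη t).pow 2).const_mul c).sub (hg t)).congr_deriv ?_
    simp only [Nat.cast_ofNat]
    ring
  have h2 := ((((hη 0).mul hη').const_mul 2).const_mul c).sub hg'
  have h3 := second_deriv_nonpos_of_isLocalMax h1 h2 hmax
  linarith

/-! ### A Liouville theorem for positive solutions of the Allen–Cahn equation -/

section Liouville

variable {n : ℕ} {w : EuclideanSpace ℝ (Fin n) → ℝ}

/-- First derivative of a `C²` function along a coordinate line. -/
lemma hasDerivAt_line (hw : ContDiff ℝ 2 w) (y : EuclideanSpace ℝ (Fin n)) (i : Fin n) (t : ℝ) :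
    HasDerivAt (fun t : ℝ => w (y + t • EuclideanSpace.single i 1))
      (fderiv ℝ w (y + t • EuclideanSpace.single i 1) (EuclideanSpace.single i 1)) t := by
  have hl : HasDerivAt (fun t : ℝ => y + t • (EuclideanSpace.single i 1 : EuclideanSpace ℝ (Fin n)))
      (EuclideanSpace.single i 1) t := by
    simpa using ((hasDerivAt_id t).smul_const
      (EuclideanSpace.single i 1 : EuclideanSpace ℝ (Fin n))).const_add y
  exact ((hw.differentiable (by norm_num)) _).hasFDerivAt.comp_hasDerivAt t hl

/-- Second derivative along a coordinate line at the base point, as it appears in `lap`. -/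
lemma hasDerivAt_line_fderiv (hw : ContDiff ℝ 2 w) (y : EuclideanSpace ℝ (Fin n)) (i : Fin n) :
    HasDerivAt (fun t : ℝ =>
        fderiv ℝ w (y + t • EuclideanSpace.single i 1) (EuclideanSpace.single i 1))
      (fderiv ℝ (fun z => fderiv ℝ w z (EuclideanSpace.single i 1)) y
        (EuclideanSpace.single i 1)) 0 := by
  have hl : HasDerivAt (fun t : ℝ => y + t • (EuclideanSpace.single i 1 : EuclideanSpace ℝ (Fin n)))
      (EuclideanSpace.single i 1) 0 := by
    simpa using ((hasDerivAt_id (0 : ℝ)).smul_const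
      (EuclideanSpace.single i 1 : EuclideanSpace ℝ (Fin n))).const_add y
  have hd : Differentiable ℝ (fun z => fderiv ℝ w z (EuclideanSpace.single i 1)) :=
    ((hw.fderiv_right (m := 1) (by norm_num)).differentiable (by norm_num)).clm_apply
      (differentiable_const _)
  have h := (hd (y + (0 : ℝ) • EuclideanSpace.single i 1)).hasFDerivAt.comp_hasDerivAt 0 hl
  exact h.congr_deriv (by simp)

lemma weight_line (x y : EuclideanSpace ℝ (Fin n)) (i : Fin n) (R t : ℝ) :
    R ^ 2 - ‖y + t • EuclideanSpace.single i 1 - x‖ ^ 2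
      = (R ^ 2 - ‖y - x‖ ^ 2) - 2 * (y - x) i * t - t ^ 2 := by
  have h : y + t • EuclideanSpace.single i 1 - x
      = (y - x) + t • (EuclideanSpace.single i (1 : ℝ) : EuclideanSpace ℝ (Fin n)) := by abel
  rw [h, norm_add_sq_real, inner_smul_right, EuclideanSpace.inner_single_right, norm_smul,
    PiLp.norm_single]
  simp
  ring

/-- A local maximum restricts to a local maximum along each coordinate line. -/
lemma isLocalMax_line {F : EuclideanSpace ℝ (Fin n) → ℝ} {y : EuclideanSpace ℝ (Fin n)}
    (h : IsLocalMax F y) (i : Fin n) :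
    IsLocalMax (fun t : ℝ => F (y + t • EuclideanSpace.single i 1)) 0 := by
  have hc : Tendsto (fun t : ℝ => y + t • (EuclideanSpace.single i 1 : EuclideanSpace ℝ (Fin n)))
      (nhds 0) (nhds y) := by
    have : Continuous
        (fun t : ℝ => y + t • (EuclideanSpace.single i 1 : EuclideanSpace ℝ (Fin n))) := by
      fun_prop
    simpa using this.tendsto 0
  filter_upwards [hc.eventually (show ∀ᶠ z in nhds y, F z ≤ F y from h)] with t ht
  simpa using ht

/-- Keller–Osserman type bound at the centre of a ball, from the maximum of
`(R² - |· - x|²) w` over that ball. -/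
lemma sq_le_of_allenCahn (hw : ContDiff ℝ 2 w) (hpos : ∀ x, 0 < w x)
    (heq : ∀ x, lap n w x = w x ^ 3 - w x) (x : EuclideanSpace ℝ (Fin n)) {R : ℝ} (hR : 0 < R) :
    w x ^ 2 ≤ 1 + (8 + 2 * n) / R ^ 2 := by
  have hcont : Continuous (fun y => (R ^ 2 - ‖y - x‖ ^ 2) * w y) := by
    have := hw.continuous
    fun_prop
  obtain ⟨y, -, hy⟩ := (isCompact_closedBall x R).exists_isMaxOn
    ⟨x, Metric.mem_closedBall_self hR.le⟩ hcont.continuousOn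
  have hyx : R ^ 2 * w x ≤ (R ^ 2 - ‖y - x‖ ^ 2) * w y := by
    have := hy (Metric.mem_closedBall_self hR.le)
    simpa using this
  set a := R ^ 2 - ‖y - x‖ ^ 2 with ha_def
  have hR2 : 0 < R ^ 2 := by positivity
  have ha : 0 < a := by
    have h1 : 0 < a * w y := lt_of_lt_of_le (mul_pos hR2 (hpos x)) hyx
    exact pos_of_mul_pos_left h1 (hpos y).le
  have hyball : y ∈ Metric.ball x R := by
    rw [mem_ball_iff_norm]
    exact lt_of_pow_lt_pow_left₀ 2 hR.le (by linarith)
  have hloc : IsLocalMax (fun y => (R ^ 2 - ‖y - x‖ ^ 2) * w y) y :=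
    hy.isLocalMax (Filter.mem_of_superset (Metric.isOpen_ball.mem_nhds hyball)
      Metric.ball_subset_closedBall)
  have hi : ∀ i : Fin n, a ^ 2 * fderiv ℝ (fun z => fderiv ℝ w z (EuclideanSpace.single i 1)) y
        (EuclideanSpace.single i 1) ≤ (8 * ((y - x) i) ^ 2 + 2 * a) * w y := by
    intro i
    have h := isLocalMax_line hloc i
    simp only [weight_line] at h
    have := second_deriv_le_of_weighted_max (hasDerivAt_line hw y i)
      (hasDerivAt_line_fderiv hw y i) ha h
    simpa using this
  have hsum : a ^ 2 * (w y ^ 3 - w y) ≤ (8 * ‖y - x‖ ^ 2 + 2 * n * a) * w y := by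
    rw [← heq y, lap, Finset.mul_sum]
    refine (Finset.sum_le_sum fun i _ => hi i).trans_eq ?_
    rw [← Finset.sum_mul, Finset.sum_add_distrib, ← Finset.mul_sum, EuclideanSpace.real_norm_sq_eq]
    simp
    left; ring
  have hsum' : a ^ 2 * (w y ^ 2 - 1) ≤ 8 * ‖y - x‖ ^ 2 + 2 * n * a := by
    refine le_of_mul_le_mul_right ?_ (hpos y)
    linarith
  have hr0 : 0 ≤ ‖y - x‖ ^ 2 := by positivity
  have haR : a ≤ R ^ 2 := by linarith
  have hrR : ‖y - x‖ ^ 2 ≤ R ^ 2 := by linarith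
  have ha2 : a ^ 2 ≤ (R ^ 2) ^ 2 := pow_le_pow_left₀ ha.le haR 2
  have hna : (n : ℝ) * a ≤ n * R ^ 2 := mul_le_mul_of_nonneg_left haR (Nat.cast_nonneg n)
  have hsq : (R ^ 2 * w x) ^ 2 ≤ (a * w y) ^ 2 :=
    pow_le_pow_left₀ (mul_pos hR2 (hpos x)).le hyx 2
  have hfin : (R ^ 2) ^ 2 * w x ^ 2 ≤ (R ^ 2) ^ 2 * (1 + (8 + 2 * n) / R ^ 2) := by
    have : (R ^ 2) ^ 2 * (1 + (8 + 2 * n) / R ^ 2) = (R ^ 2) ^ 2 + (8 + 2 * n) * R ^ 2 := by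
      field_simp
    rw [this]
    linarith
  exact le_of_mul_le_mul_left hfin (by positivity)

/-- Lower bound at the centre of a ball: the largest multiple of the compactly supported
subsolution `(R² - |· - x|²)²` lying below `w` touches `w` where `w² ≥ 1 - O(R⁻²)`, and the
centre is where that subsolution is largest. -/
lemma le_sq_of_allenCahn (hw : ContDiff ℝ 2 w) (hpos : ∀ x, 0 < w x)
    (heq : ∀ x, lap n w x = w x ^ 3 - w x) (x : EuclideanSpace ℝ (Fin n)) {R : ℝ} (hR : 0 < R) :
    1 - (n + 2) ^ 2 / 2 / R ^ 2 ≤ w x ^ 2 := by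
  have hcont : Continuous (fun y => (R ^ 2 - ‖y - x‖ ^ 2) ^ 2 / w y) := by
    have := hw.continuous
    have h0 : ∀ y, w y ≠ 0 := fun y => (hpos y).ne'
    fun_prop (disch := assumption)
  obtain ⟨y, hyB, hy⟩ := (isCompact_closedBall x R).exists_isMaxOn
    ⟨x, Metric.mem_closedBall_self hR.le⟩ hcont.continuousOn
  have hR2 : 0 < R ^ 2 := by positivity
  have hyx : (R ^ 2) ^ 2 / w x ≤ (R ^ 2 - ‖y - x‖ ^ 2) ^ 2 / w y := by
    have := hy (Metric.mem_closedBall_self hR.le)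
    simpa using this
  set a := R ^ 2 - ‖y - x‖ ^ 2 with ha_def
  have hr0 : 0 ≤ ‖y - x‖ ^ 2 := by positivity
  have haR : a ≤ R ^ 2 := by linarith
  have ha0 : a ≠ 0 := by
    intro h0
    have h1 : 0 < (R ^ 2) ^ 2 / w x := div_pos (by positivity) (hpos x)
    rw [h0] at hyx
    simp at hyx
    linarith
  have ha : 0 < a := by
    have h1 : ‖y - x‖ ≤ R := mem_closedBall_iff_norm.1 hyB
    have h2 : ‖y - x‖ ^ 2 ≤ R ^ 2 := pow_le_pow_left₀ (norm_nonneg _) h1 2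
    exact lt_of_le_of_ne (by linarith) ha0.symm
  have hyball : y ∈ Metric.ball x R := by
    rw [mem_ball_iff_norm]
    exact lt_of_pow_lt_pow_left₀ 2 hR.le (by linarith)
  have ha2 : 0 < a ^ 2 := by positivity
  set c := w y / a ^ 2 with hc_def
  have hc : 0 < c := div_pos (hpos y) ha2
  have hwy : w y = c * a ^ 2 := by rw [hc_def]; field_simp
  have hbelow : ∀ z ∈ Metric.closedBall x R, c * (R ^ 2 - ‖z - x‖ ^ 2) ^ 2 ≤ w z := by
    intro z hz
    have h : (R ^ 2 - ‖z - x‖ ^ 2) ^ 2 / w z ≤ a ^ 2 / w y := hy hz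
    rw [div_le_div_iff₀ (hpos z) (hpos y)] at h
    rw [hc_def, div_mul_eq_mul_div, div_le_iff₀ ha2]
    linarith
  have hloc : IsLocalMax (fun y => c * (R ^ 2 - ‖y - x‖ ^ 2) ^ 2 - w y) y := by
    filter_upwards [Metric.isOpen_ball.mem_nhds hyball] with z hz
    have h := hbelow z (Metric.ball_subset_closedBall hz)
    rw [← ha_def, ← hwy]
    linarith
  have hi : ∀ i : Fin n, c * (8 * ((y - x) i) ^ 2 - 4 * a) ≤
      fderiv ℝ (fun z => fderiv ℝ w z (EuclideanSpace.single i 1)) y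
        (EuclideanSpace.single i 1) := by
    intro i
    have h := isLocalMax_line hloc i
    simp only [weight_line] at h
    exact le_second_deriv_of_touching (hasDerivAt_line hw y i) (hasDerivAt_line_fderiv hw y i) h
  have hsum : c * (8 * ‖y - x‖ ^ 2 - 4 * n * a) ≤ w y ^ 3 - w y := by
    rw [← heq y, lap]
    refine le_trans (le_of_eq ?_) (Finset.sum_le_sum fun i _ => hi i)
    rw [← Finset.mul_sum, Finset.sum_sub_distrib, ← Finset.mul_sum, EuclideanSpace.real_norm_sq_eq]
    simp
    left; ring
  set δ : ℝ := (n + 2) ^ 2 / 2 / R ^ 2 with hδ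
  -- The discriminant of this quadratic in `a` vanishes for the chosen `δ`.
  have hquad : -(δ * a ^ 2) ≤ 8 * ‖y - x‖ ^ 2 - 4 * n * a := by
    have h1 : 8 * ‖y - x‖ ^ 2 - 4 * n * a + δ * a ^ 2
        = ((n + 2) * a - 4 * R ^ 2) ^ 2 / (2 * R ^ 2) := by
      have : ‖y - x‖ ^ 2 = R ^ 2 - a := by rw [ha_def]; ring
      rw [this, hδ]
      field_simp
      ring
    have h2 : 0 ≤ ((n + 2) * a - 4 * R ^ 2) ^ 2 / (2 * R ^ 2) := by positivity
    linarith
  have h1 : 1 - δ ≤ w y ^ 2 := by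
    refine le_of_mul_le_mul_left ?_ (hpos y)
    have h2 := mul_le_mul_of_nonneg_left hquad hc.le
    have h3 : c * -(δ * a ^ 2) = -(δ * w y) := by rw [hwy]; ring
    linarith
  have h2 : w y ≤ w x := by
    have h3 := hbelow x (Metric.mem_closedBall_self hR.le)
    simp only [sub_self, norm_zero] at h3
    have h4 : c * a ^ 2 ≤ c * (R ^ 2) ^ 2 :=
      mul_le_mul_of_nonneg_left (pow_le_pow_left₀ ha.le haR 2) hc.le
    rw [hwy]
    refine h4.trans (le_trans (le_of_eq ?_) h3)
    ring
  exact h1.trans (pow_le_pow_left₀ (hpos y).le h2 2)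

/-- Liouville theorem: a positive entire solution of `Δw = w³ - w` is identically `1`. -/
lemma eq_one_of_allenCahn (hw : ContDiff ℝ 2 w) (hpos : ∀ x, 0 < w x)
    (heq : ∀ x, lap n w x = w x ^ 3 - w x) (x : EuclideanSpace ℝ (Fin n)) : w x = 1 := by
  have hlim : ∀ K : ℝ, Tendsto (fun R : ℝ => K / R ^ 2) atTop (nhds 0) := fun K =>
    tendsto_const_nhds.div_atTop (tendsto_pow_atTop (by norm_num))
  have hup : w x ^ 2 ≤ 1 + 0 := by
    refine ge_of_tendsto ((hlim (8 + 2 * n)).const_add 1) ?_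
    filter_upwards [eventually_gt_atTop 0] with R hR
    exact sq_le_of_allenCahn hw hpos heq x hR
  have hlo : 1 - 0 ≤ w x ^ 2 := by
    refine le_of_tendsto ((hlim ((n + 2) ^ 2 / 2)).const_sub 1) ?_
    filter_upwards [eventually_gt_atTop 0] with R hR
    exact le_sq_of_allenCahn hw hpos heq x hR
  have h : w x ^ 2 = 1 := by linarith
  exact (pow_eq_one_iff_of_nonneg (hpos x).le (by norm_num)).1 h

end Liouville

/-! ### The sum of the two components -/

lemma lap_add {n : ℕ} {u v : EuclideanSpace ℝ (Fin n) → ℝ} (hu : ContDiff ℝ 2 u)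
    (hv : ContDiff ℝ 2 v) (x : EuclideanSpace ℝ (Fin n)) :
    lap n (fun y => u y + v y) x = lap n u x + lap n v x := by
  have hd : ∀ {f : EuclideanSpace ℝ (Fin n) → ℝ}, ContDiff ℝ 2 f → ∀ e,
      Differentiable ℝ (fun z => fderiv ℝ f z e) := fun hf e =>
    ((hf.fderiv_right (m := 1) (by norm_num)).differentiable (by norm_num)).clm_apply
      (differentiable_const _)
  simp only [lap]
  rw [← Finset.sum_add_distrib]
  refine Finset.sum_congr rfl fun i _ => ?_
  have h1 : (fun y => fderiv ℝ (fun y => u y + v y) y (EuclideanSpace.single i 1))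
      = fun y => fderiv ℝ u y (EuclideanSpace.single i 1)
        + fderiv ℝ v y (EuclideanSpace.single i 1) := by
    funext y
    rw [fderiv_fun_add (hu.differentiable (by norm_num) y) (hv.differentiable (by norm_num) y)]
    rfl
  rw [h1, fderiv_fun_add (hd hu _ x) (hd hv _ x)]
  rfl

/-- Theorem 1.9 (i): for `Λ = 3` and positive solutions,
`∂_N u > 0` everywhere iff `∂_N v < 0` everywhere. -/
theorem stmt_9 (N : ℕ)
    (u v : EuclideanSpace ℝ (Fin (N + 1)) → ℝ)
    (hsol : IsSolution (N + 1) 3 u v)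
    (hu : ∀ x, 0 < u x) (hv : ∀ x, 0 < v x) :
    (∀ x, 0 < fderiv ℝ u x (EuclideanSpace.single (Fin.last N) 1)) ↔
    (∀ x, fderiv ℝ v x (EuclideanSpace.single (Fin.last N) 1) < 0) := by
  obtain ⟨hcu, hcv, hequ, heqv⟩ := hsol
  have hone : ∀ x, u x + v x = 1 :=
    eq_one_of_allenCahn (hcu.add hcv) (fun x => add_pos (hu x) (hv x)) fun x => by
      rw [lap_add hcu hcv]
      linarith [hequ x, heqv x]
  have hvu : v = fun x => 1 - u x := funext fun x => by linarith [hone x]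
  have hfd : ∀ x e, fderiv ℝ v x e = -fderiv ℝ u x e := by
    intro x e
    rw [hvu, fderiv_const_sub]
    rfl
  simp only [hfd, neg_lt_zero]
end
end

section
/- Let θ > 0 and γ > 0 satisfy θ < 2^(−γ), and let R₀ > 0 and C > 0. Let 𝓛 : (R₀, +∞) → ℝ be a nonnegative and nondecreasing function and g : (R₀, +∞) → ℝ a nonnegative function with g(R) → 0 as R → +∞, such that for every R > R₀ one has 𝓛(R) ≤ θ 𝓛(2R) + g(R) and 𝓛(R) ≤ C R^γ. Then 𝓛(R) = 0 for every R > R₀. -/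
/-!
Fix `ε > 0` and choose `S ≥ R` beyond which `g < ε (1 - θ)`. Iterating the doubling inequality
`n` times from `S` gives `L S ≤ θ ^ n * L (2 ^ n * S) + ε`, since the errors sum to at most a
geometric series with total `ε`. The growth bound turns the first term into
`C * S ^ γ * (θ * 2 ^ γ) ^ n`, which tends to `0` because `θ * 2 ^ γ < 1`. Hence
`L R ≤ L S ≤ ε` by monotonicity, for every `ε > 0`.
-/

open scoped RealInnerProductSpace
open Filter

noncomputable section

/-- Lemma 3.2: the iteration lemma for the quantity `𝓛`. -/
theorem stmt_14 (θ γ R₀ C : ℝ) (hθ : 0 < θ) (hγ : 0 < γ)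
    (hθγ : θ < (2 : ℝ) ^ (-γ)) (hR₀ : 0 < R₀) (hC : 0 < C)
    (L g : ℝ → ℝ)
    (hL_nonneg : ∀ R, R₀ < R → 0 ≤ L R)
    (hL_mono : ∀ R₁ R₂, R₀ < R₁ → R₁ ≤ R₂ → L R₁ ≤ L R₂)
    (hg_nonneg : ∀ R, R₀ < R → 0 ≤ g R)
    (hg_lim : Filter.Tendsto g Filter.atTop (nhds 0))
    (h_iter : ∀ R, R₀ < R → L R ≤ θ * L (2 * R) + g R)
    (h_growth : ∀ R, R₀ < R → L R ≤ C * R ^ γ) :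
    ∀ R, R₀ < R → L R = 0 := by
  have h2γ : (0 : ℝ) < 2 ^ γ := Real.rpow_pos_of_pos two_pos γ
  have hθ1 : θ < 1 :=
    hθγ.trans (Real.rpow_lt_one_of_one_lt_of_neg one_lt_two (neg_lt_zero.mpr hγ))
  have hq1 : θ * 2 ^ γ < 1 := by
    rw [Real.rpow_neg two_pos.le] at hθγ
    calc θ * 2 ^ γ < ((2 : ℝ) ^ γ)⁻¹ * 2 ^ γ := mul_lt_mul_of_pos_right hθγ h2γ
      _ = 1 := inv_mul_cancel₀ h2γ.ne'
  intro R hR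
  refine le_antisymm (le_of_forall_pos_le_add fun ε hε => ?_) (hL_nonneg R hR)
  rw [zero_add]
  -- The threshold `ε * (1 - θ)` makes `ε` the fixed point of `t ↦ θ * t + ε * (1 - θ)`.
  obtain ⟨S₀, hS₀⟩ := eventually_atTop.mp
    (hg_lim.eventually_lt_const (mul_pos hε (sub_pos.mpr hθ1)))
  have hRS : R ≤ max R S₀ := le_max_left _ _
  have hSS : S₀ ≤ max R S₀ := le_max_right _ _
  generalize max R S₀ = S at hRS hSS
  have key : ∀ n : ℕ, ∀ T, S ≤ T → L T ≤ θ ^ n * L (2 ^ n * T) + ε := by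
    intro n
    induction n with
    | zero => intro T _; simpa using hε.le
    | succ n ih =>
      intro T hT
      have h1 := h_iter T (by linarith)
      have h2 := mul_le_mul_of_nonneg_left (ih (2 * T) (by linarith)) hθ.le
      have h3 := hS₀ T (hSS.trans hT)
      have e : (2 : ℝ) ^ (n + 1) * T = 2 ^ n * (2 * T) := by ring
      rw [e, pow_succ]
      linarith
  have bound : ∀ n : ℕ, L S ≤ C * S ^ γ * (θ * 2 ^ γ) ^ n + ε := by
    intro n
    have hS : 0 < S := by linarith
    have hge : S ≤ 2 ^ n * S := le_mul_of_one_le_left hS.le (one_le_pow₀ one_le_two)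
    have h1 := mul_le_mul_of_nonneg_left (h_growth (2 ^ n * S) (by linarith))
      (pow_nonneg hθ.le n)
    have e : ((2 : ℝ) ^ n * S) ^ γ = (2 ^ γ) ^ n * S ^ γ := by
      rw [Real.mul_rpow (by positivity) hS.le, Real.rpow_pow_comm two_pos.le]
    rw [e] at h1
    calc L S ≤ θ ^ n * L (2 ^ n * S) + ε := key n S le_rfl
      _ ≤ θ ^ n * (C * ((2 ^ γ) ^ n * S ^ γ)) + ε := by linarith
      _ = C * S ^ γ * (θ * 2 ^ γ) ^ n + ε := by rw [mul_pow]; ring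
  have lim : Tendsto (fun n : ℕ => C * S ^ γ * (θ * 2 ^ γ) ^ n + ε) atTop (nhds ε) := by
    simpa using ((tendsto_pow_atTop_nhds_zero_of_lt_one (by positivity) hq1).const_mul
      (C * S ^ γ)).add_const ε
  exact (hL_mono R S hR hRS).trans (ge_of_tendsto' lim bound)
end
end
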